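/- Let s be a nontrivial circuit state of a polynomial automaton A of degree d. Then for every n ≥ 1 there is exactly one word v ∈ X^n such that s|_v has the same degree d as s, and for all other words u ∈ X^n of length n, the state s|_u has degree strictly less than d. -/

import Mathlib

/-- A finite invertible automaton over the alphabet `X`. -/
structure Automaton (X : Type*) where
  S : Type
  [fin : Fintype S]
  trans : S → X → S
  out : S → X → X
  inv : ∀ s : S, Function.Bijective (out s)

attribute [instance] Automaton.fin

namespace Automaton

variable {X : Type*} (A : Automaton X)

/-- The state reached from `s` after reading the finite word `v`: the restriction `s|_v`. -/
def transWord (s : A.S) (v : List X) : A.S := v.foldl A.trans s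

/-- The sequence of states visited while processing the infinite word `w` from `s`. -/
def run (s : A.S) (w : ℕ → X) : ℕ → A.S :=
  fun n => Nat.rec s (fun k sk => A.trans sk (w k)) n

/-- The action of the state `s` on infinite words. -/
def act (s : A.S) : (ℕ → X) → (ℕ → X) :=
  fun w n => A.out (A.run s w n) (w n)

/-- A state is trivial iff it acts trivially on `X^ω`. -/
def IsTrivialState (s : A.S) : Prop := A.act s = id

/-- A simple directed cycle in (the Moore diagram of) the automaton `A`. -/
def IsCycle (c : List (A.S × X)) : Prop :=
  c ≠ [] ∧ (c.map Prod.fst).Nodup ∧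
    c.Chain' (fun p q => A.trans p.1 p.2 = q.1) ∧
    ∀ h : c ≠ [], A.trans (c.getLast h).1 (c.getLast h).2 = (c.head h).1

/-- A nontrivial simple directed cycle (a cycle other than the loop at the trivial state). -/
def IsNontrivialCycle (c : List (A.S × X)) : Prop :=
  A.IsCycle c ∧ ∃ p ∈ c, ¬A.IsTrivialState p.1

/-- The edge relation of the underlying directed graph of `A`. -/
def Edge (s t : A.S) : Prop := ∃ x : X, A.trans s x = t

/-- There is a directed path from the cycle `c₁` to the cycle `c₂`. -/
def ConnectedTo (c₁ c₂ : List (A.S × X)) : Prop :=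
  ∃ s t : A.S, s ∈ c₁.map Prod.fst ∧ t ∈ c₂.map Prod.fst ∧
    Relation.ReflTransGen A.Edge s t

/-- `A` is a polynomial automaton: distinct nontrivial simple directed cycles are disjoint. -/
def IsPolynomial : Prop :=
  ∀ c₁ c₂ : List (A.S × X), A.IsNontrivialCycle c₁ → A.IsNontrivialCycle c₂ →
    (∃ s, s ∈ c₁.map Prod.fst ∧ s ∈ c₂.map Prod.fst) →
    ∃ n : ℕ, c₂ = c₁.rotate n

/-- At most `t` pairwise distinct nontrivial cycles of `A` can be connected by directed
paths into a chain. -/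
def ChainLe (t : ℕ) : Prop :=
  ∀ (r : ℕ) (c : ℕ → List (A.S × X)),
    (∀ i < r, A.IsNontrivialCycle (c i)) →
    (∀ i < r, ∀ j < r, i ≠ j → ¬∃ n : ℕ, c j = (c i).rotate n) →
    (∀ i, i + 1 < r → A.ConnectedTo (c i) (c (i + 1))) →
    r ≤ t

end Automaton

/-- `Pol m`: the set of transformations of `X^ω` arising as states of polynomial
automata of degree `≤ m` (i.e. with at most `m + 1` nontrivial cycles in a chain). -/
def Pol (X : Type*) (m : ℕ) : Set ((ℕ → X) → (ℕ → X)) :=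
  {f | ∃ (A : Automaton X) (s : A.S), A.IsPolynomial ∧ A.ChainLe (m + 1) ∧ A.act s = f}

/-- `Pol(-1)`: the set of finitary transformations, states of polynomial automata with
no nontrivial cycles. -/
def Finitary (X : Type*) : Set ((ℕ → X) → (ℕ → X)) :=
  {f | ∃ (A : Automaton X) (s : A.S), A.IsPolynomial ∧ A.ChainLe 0 ∧ A.act s = f}

/-- `f` has degree exactly `d` in the polynomial hierarchy: `f ∈ Pol(d) ∖ Pol(d-1)`. -/
def HasDegree {X : Type*} (f : (ℕ → X) → (ℕ → X)) (d : ℕ) : Prop :=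
  f ∈ Pol X d ∧ f ∉ Finitary X ∧ ∀ d' < d, f ∉ Pol X d'

/-- `f` has degree strictly less than `d` in the hierarchy. -/
def DegreeLt {X : Type*} (f : (ℕ → X) → (ℕ → X)) (d : ℕ) : Prop :=
  match d with
  | 0 => f ∈ Finitary X
  | d' + 1 => f ∈ Pol X d'

/-!
Let `f` have degree `d` and satisfy `f|_w = f` for some nonempty word `w`. Realise `f` by a state of
a polynomial automaton `B` in which at most `d + 1` nontrivial cycles form a chain. Reading `w`
repeatedly never changes the transformation realised, and `B` is finite, so `f` is realised by a
state `t` of `B` lying on a cycle. Nontrivial cycles of `B` are disjoint, so exactly one word `v` of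
each length leads from `t` to a state from which `t` can be reached again; as `f` is a restriction
of `f|_v`, the degree does not drop along `v`. Along any other word `u` one leaves the cycle of `t`
for good: that cycle can be put in front of every chain of cycles reachable from `t|_u`, whence
those chains have at most `d` members and `f|_u` has degree less than `d`.
-/

theorem exists_iterate_mem_periodicPts {α : Type*} [Finite α] (g : α → α) (a : α) :
    ∃ k, g^[k] a ∈ Function.periodicPts g := by
  obtain ⟨i, j, hij, heq⟩ := Set.finite_univ.exists_lt_map_eq_of_forall_mem
    (f := fun k => g^[k] a) fun _ => Set.mem_univ _
  refine ⟨i, Function.mk_mem_periodicPts (Nat.sub_pos_of_lt hij) ?_⟩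
  rw [Function.IsPeriodicPt, Function.IsFixedPt, ← Function.iterate_add_apply,
    Nat.sub_add_cancel hij.le]
  exact heq.symm

section Restriction

variable {X : Type*}

/-- The restriction `f|_x` of a transformation of `X^ω` to a letter: it sends `w` to the image of
`xw` with its first letter removed. -/
def restrictLetter (f : (ℕ → X) → (ℕ → X)) (x : X) : (ℕ → X) → (ℕ → X) :=
  fun w n => f (Stream'.cons x w) (n + 1)

/-- The restriction `f|_v` of a transformation of `X^ω` to a finite word. For a state of an
automaton it is the action of the state reached by reading `v`, but it depends on `f` alone, so it
can be computed in any automaton realising `f`. -/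
def restrictWord (f : (ℕ → X) → (ℕ → X)) (v : List X) : (ℕ → X) → (ℕ → X) :=
  v.foldl restrictLetter f

theorem restrictWord_append (f : (ℕ → X) → (ℕ → X)) (u v : List X) :
    restrictWord f (u ++ v) = restrictWord (restrictWord f u) v :=
  List.foldl_append

theorem restrictWord_id (v : List X) : restrictWord (id : (ℕ → X) → (ℕ → X)) v = id := by
  induction v with
  | nil => rfl
  | cons _ _ ih => exact ih

end Restriction

namespace Automaton

variable {X : Type*} {A B : Automaton X}

theorem transWord_append (s : A.S) (u v : List X) :
    A.transWord s (u ++ v) = A.transWord (A.transWord s u) v :=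
  List.foldl_append

theorem transWord_cons (s : A.S) (x : X) (v : List X) :
    A.transWord s (x :: v) = A.transWord (A.trans s x) v := rfl

theorem transWord_flatten_replicate (s : A.S) (w : List X) (k : ℕ) :
    A.transWord s (List.replicate k w).flatten = (A.transWord · w)^[k] s := by
  induction k generalizing s with
  | zero => rfl
  | succ k ih =>
    rw [List.replicate_succ, List.flatten_cons, transWord_append, ih, Function.iterate_succ_apply]

theorem reflTransGen_edge_iff {s t : A.S} :
    Relation.ReflTransGen A.Edge s t ↔ ∃ v, A.transWord s v = t := by
  constructor
  · intro hst
    induction hst with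
    | refl => exact ⟨[], rfl⟩
    | tail _ hedge ih =>
      obtain ⟨v, rfl⟩ := ih
      obtain ⟨x, rfl⟩ := hedge
      exact ⟨v ++ [x], transWord_append s v [x]⟩
  · rintro ⟨v, rfl⟩
    induction v generalizing s with
    | nil => exact .refl
    | cons x v ih => exact .head ⟨x, rfl⟩ ih

theorem run_cons (s : A.S) (x : X) (w : ℕ → X) (n : ℕ) :
    A.run s (Stream'.cons x w) (n + 1) = A.run (A.trans s x) w n := by
  induction n with
  | zero => rfl
  | succ n ih => exact congrArg (A.trans · (w n)) ih

theorem act_trans (s : A.S) (x : X) : A.act (A.trans s x) = restrictLetter (A.act s) x := by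
  funext w n
  exact congrArg (A.out · (w n)) (run_cons s x w n).symm

theorem act_transWord (s : A.S) (v : List X) :
    A.act (A.transWord s v) = restrictWord (A.act s) v := by
  induction v generalizing s with
  | nil => rfl
  | cons x v ih => rw [transWord_cons, ih, act_trans]; rfl

theorem IsTrivialState.transWord {s : A.S} (hs : A.IsTrivialState s) (v : List X) :
    A.IsTrivialState (A.transWord s v) := by
  rw [IsTrivialState, act_transWord, hs, restrictWord_id]

section Cycles

variable (A) in
/-- The list of edges traversed when reading a word from a given state. -/
def path : A.S → List X → List (A.S × X)
  | _, [] => []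
  | s, x :: v => (s, x) :: path (A.trans s x) v

theorem map_fst_path_append (s : A.S) (v : List X) :
    (A.path s v).map Prod.fst ++ [A.transWord s v] = v.scanl A.trans s := by
  induction v generalizing s with
  | nil => simp [path, transWord]
  | cons x v ih => simp [path, transWord_cons, ih]

theorem isChain_path (s : A.S) (v : List X) :
    (A.path s v).IsChain (fun p q => A.trans p.1 p.2 = q.1) := by
  induction v generalizing s with
  | nil => exact .nil
  | cons x v ih =>
    refine (ih (A.trans s x)).cons ?_
    cases v <;> simp [path]

theorem path_map_snd_of_isChain (p : A.S × X) (l : List (A.S × X))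
    (hl : (p :: l).IsChain (fun p q => A.trans p.1 p.2 = q.1)) :
    A.path p.1 ((p :: l).map Prod.snd) = p :: l := by
  induction l generalizing p with
  | nil => rfl
  | cons q l ih =>
    obtain ⟨hpq, hl⟩ := List.isChain_cons_cons.1 hl
    rw [List.map_cons, path, hpq, ih q hl]

theorem trans_getLast_path (s : A.S) (v : List X) (hv : A.path s v ≠ []) :
    A.trans ((A.path s v).getLast hv).1 ((A.path s v).getLast hv).2 = A.transWord s v := by
  induction v generalizing s with
  | nil => exact absurd rfl hv
  | cons x v ih =>
    cases v with
    | nil => rfl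
    | cons y v =>
      simp only [path, transWord_cons, List.getLast_cons_cons] at ih ⊢
      exact ih (A.trans s x) (List.cons_ne_nil _ _)

theorem exists_append_of_mem_scanl {s q : A.S} {v : List X} (hq : q ∈ v.scanl A.trans s) :
    ∃ a b, v = a ++ b ∧ A.transWord s a = q ∧ b.scanl A.trans q <:+ v.scanl A.trans s := by
  induction v generalizing s with
  | nil => exact ⟨[], [], rfl, by simpa [transWord, eq_comm] using hq, by simp_all⟩
  | cons x v ih =>
    rw [List.scanl_cons] at hq ⊢
    rcases List.mem_cons.1 hq with rfl | hq
    · exact ⟨[], x :: v, rfl, rfl, by rw [List.scanl_cons]⟩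
    · obtain ⟨a, b, rfl, ha, hb⟩ := ih hq
      exact ⟨x :: a, b, rfl, ha, hb.trans (List.suffix_cons _ _)⟩

theorem exists_transWord_eq_nodup_scanl (s : A.S) (v : List X) :
    ∃ u, A.transWord s u = A.transWord s v ∧ (u.scanl A.trans s).Nodup := by
  induction v generalizing s with
  | nil => exact ⟨[], rfl, by simp⟩
  | cons x v ih =>
    obtain ⟨u, hu, hnodup⟩ := ih (A.trans s x)
    -- Loop erasure: if the walk comes back to `s`, discard everything before that visit.
    by_cases hs : s ∈ u.scanl A.trans (A.trans s x)
    · obtain ⟨a, b, rfl, ha, hsuffix⟩ := exists_append_of_mem_scanl hs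
      rw [transWord_append, ha] at hu
      exact ⟨b, hu, hnodup.sublist hsuffix.sublist⟩
    · exact ⟨x :: u, hu, by rw [List.scanl_cons]; exact hnodup.cons hs⟩

theorem exists_isCycle_cons {t : A.S} {x : X} {v : List X} (h : A.transWord t (x :: v) = t) :
    ∃ l, A.IsCycle ((t, x) :: l) := by
  obtain ⟨u, hu, hnodup⟩ := exists_transWord_eq_nodup_scanl (A.trans t x) v
  replace hu : A.transWord (A.trans t x) u = t := hu.trans h
  refine ⟨A.path (A.trans t x) u, List.cons_ne_nil _ _, ?_, isChain_path t (x :: u), fun hne =>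
    (trans_getLast_path t (x :: u) hne).trans hu⟩
  rw [← map_fst_path_append, hu] at hnodup
  exact List.IsRotated.cons_append_singleton.nodup_iff.2 hnodup

theorem IsCycle.exists_path_eq {c : List (A.S × X)} (hc : A.IsCycle c) :
    ∃ s v, v ≠ [] ∧ c = A.path s v ∧ A.transWord s v = s := by
  obtain ⟨hne, -, hchain, hclosed⟩ := hc
  obtain ⟨p, l, rfl⟩ := List.exists_cons_of_ne_nil hne
  have hpath := path_map_snd_of_isChain p l hchain
  refine ⟨p.1, (p :: l).map Prod.snd, List.cons_ne_nil _ _, hpath.symm, ?_⟩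
  rw [← trans_getLast_path p.1 ((p :: l).map Prod.snd) (by rwa [hpath])]
  simpa only [hpath, List.head_cons] using hclosed hne

variable (A) in
/-- A circuit state: one that lies on a simple directed cycle. -/
def IsCircuit (s : A.S) : Prop :=
  ∃ c : List (A.S × X), A.IsCycle c ∧ s ∈ c.map Prod.fst

theorem isCircuit_iff_exists_transWord_eq {s : A.S} :
    A.IsCircuit s ↔ ∃ w, w ≠ [] ∧ A.transWord s w = s := by
  constructor
  · rintro ⟨c, hc, hs⟩
    obtain ⟨r, v, hv, rfl, hclosed⟩ := hc.exists_path_eq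
    obtain ⟨a, b, rfl, rfl, -⟩ := exists_append_of_mem_scanl
      (map_fst_path_append r v ▸ List.mem_append_left _ hs)
    refine ⟨b ++ a, by simpa [and_comm] using hv, ?_⟩
    rw [transWord_append, ← transWord_append r, hclosed]
  · rintro ⟨w, hw, hclosed⟩
    obtain ⟨x, v, rfl⟩ := List.exists_cons_of_ne_nil hw
    obtain ⟨l, hl⟩ := exists_isCycle_cons hclosed
    exact ⟨_, hl, List.mem_cons_self⟩

theorem IsCircuit.exists_returning_word {t : A.S} (ht : A.IsCircuit t) (n : ℕ) :
    ∃ v z, v.length = n ∧ A.transWord t (v ++ z) = t := by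
  obtain ⟨w, hw, hclosed⟩ := isCircuit_iff_exists_transWord_eq.1 ht
  induction n with
  | zero => exact ⟨[], w, rfl, hclosed⟩
  | succ n ih =>
    obtain ⟨v, z, hlen, hvz⟩ := ih
    obtain ⟨x, z', hz'⟩ := List.exists_cons_of_ne_nil (l := z ++ w) (by simp [hw])
    refine ⟨v ++ [x], z', by simp [hlen], ?_⟩
    rw [List.append_assoc, List.singleton_append, ← hz', ← List.append_assoc, transWord_append,
      hvz, hclosed]

theorem IsPolynomial.letter_eq_of_return (hA : A.IsPolynomial) {t : A.S}
    (ht : ¬A.IsTrivialState t) {x y : X} {a b : List X}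
    (ha : A.transWord t (x :: a) = t) (hb : A.transWord t (y :: b) = t) : x = y := by
  obtain ⟨l, hl⟩ := exists_isCycle_cons ha
  obtain ⟨m, hm⟩ := exists_isCycle_cons hb
  obtain ⟨n, hn⟩ := hA _ _ ⟨hl, (t, x), List.mem_cons_self, ht⟩ ⟨hm, (t, y), List.mem_cons_self, ht⟩
    ⟨t, List.mem_cons_self, List.mem_cons_self⟩
  have hy : (t, y) ∈ (t, x) :: l := List.mem_rotate.1 (hn ▸ List.mem_cons_self)
  have hinj := List.inj_on_of_nodup_map hl.2.1
  exact congrArg Prod.snd (hinj List.mem_cons_self hy rfl)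

theorem IsPolynomial.word_eq_of_return (hA : A.IsPolynomial) {t : A.S}
    (ht : ¬A.IsTrivialState t) {u v a b : List X} (hlen : u.length = v.length)
    (ha : A.transWord t (u ++ a) = t) (hb : A.transWord t (v ++ b) = t) : u = v := by
  induction u generalizing v t a b with
  | nil => exact (List.length_eq_zero_iff.1 hlen.symm).symm
  | cons x u ih =>
    obtain ⟨y, v, rfl⟩ := List.exists_cons_of_length_eq_add_one hlen.symm
    obtain rfl := hA.letter_eq_of_return ht ha hb
    have closed_at_next {z : List X} (hz : A.transWord t (x :: z) = t) :
        A.transWord (A.trans t x) (z ++ [x]) = A.trans t x := by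
      rw [transWord_append, ← transWord_cons, hz]; rfl
    have hnext : ¬A.IsTrivialState (A.trans t x) := fun htriv => ht (ha ▸ htriv.transWord (u ++ a))
    refine congrArg (x :: ·) (ih hnext (Nat.succ_injective hlen) (a := a ++ [x]) (b := b ++ [x])
      ?_ ?_)
    · rw [← List.append_assoc]; exact closed_at_next ha
    · rw [← List.append_assoc]; exact closed_at_next hb

theorem exists_isCircuit_of_restrictWord_eq {s : A.S} {w : List X} (hw : w ≠ [])
    (hfix : restrictWord (A.act s) w = A.act s) :
    ∃ t, A.act t = A.act s ∧ A.IsCircuit t := by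
  obtain ⟨k, hk⟩ := exists_iterate_mem_periodicPts (A.transWord · w) s
  obtain ⟨m, hm, hperiod⟩ := Function.mem_periodicPts.1 hk
  refine ⟨(A.transWord · w)^[k] s, ?_, isCircuit_iff_exists_transWord_eq.2
    ⟨(List.replicate m w).flatten, ?_, ?_⟩⟩
  · clear hk hperiod
    induction k with
    | zero => rfl
    | succ k ih => rw [Function.iterate_succ_apply', act_transWord, ih, hfix]
  · simpa [List.flatten_eq_nil_iff, hm.ne'] using hw
  · rw [transWord_flatten_replicate]
    exact hperiod

end Cycles

section Chains

/-- A chain of `r` pairwise distinct nontrivial cycles, each connected to the next by a directed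
path; cycles are identified up to rotation and `c i` is irrelevant for `r ≤ i`. -/
structure IsCycleChain (A : Automaton X) (r : ℕ) (c : ℕ → List (A.S × X)) : Prop where
  isNontrivialCycle : ∀ i < r, A.IsNontrivialCycle (c i)
  not_isRotated : ∀ i < r, ∀ j < r, i ≠ j → ¬c i ~r c j
  connectedTo : ∀ i, i + 1 < r → A.ConnectedTo (c i) (c (i + 1))

theorem chainLe_iff {t : ℕ} : A.ChainLe t ↔ ∀ r c, A.IsCycleChain r c → r ≤ t := by
  have eq_rotate_iff (l l' : List (A.S × X)) : (∃ n, l' = l.rotate n) ↔ l ~r l' :=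
    exists_congr fun _ => eq_comm
  simp only [ChainLe, eq_rotate_iff]
  exact ⟨fun hA r c hc => hA r c hc.1 hc.2 hc.3, fun h r c h₁ h₂ h₃ => h r c ⟨h₁, h₂, h₃⟩⟩

theorem IsCycleChain.cons {r : ℕ} {c : ℕ → List (A.S × X)} (hc : A.IsCycleChain r c)
    {c₀ : List (A.S × X)} (hc₀ : A.IsNontrivialCycle c₀) (hnew : ∀ i < r, ¬c₀ ~r c i)
    (hconn : 0 < r → A.ConnectedTo c₀ (c 0)) :
    A.IsCycleChain (r + 1) (Stream'.cons c₀ c) where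
  isNontrivialCycle
    | 0, _ => hc₀
    | i + 1, hi => hc.isNontrivialCycle i (Nat.lt_of_succ_lt_succ hi)
  not_isRotated
    | 0, _, 0, _, hij => absurd rfl hij
    | 0, _, j + 1, hj, _ => hnew j (Nat.lt_of_succ_lt_succ hj)
    | i + 1, hi, 0, _, _ => fun hrot => hnew i (Nat.lt_of_succ_lt_succ hi) hrot.symm
    | i + 1, hi, j + 1, hj, hij => hc.not_isRotated i (Nat.lt_of_succ_lt_succ hi) j
        (Nat.lt_of_succ_lt_succ hj) fun h => hij (congrArg _ h)
  connectedTo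
    | 0, h => hconn (Nat.lt_of_succ_lt_succ h)
    | i + 1, h => hc.connectedTo i (Nat.lt_of_succ_lt_succ h)

end Chains

/-- An embedding of automata: an injective map on states respecting transitions and outputs. -/
structure Embedding (A B : Automaton X) where
  toFun : A.S → B.S
  injective : Function.Injective toFun
  map_trans : ∀ s x, toFun (A.trans s x) = B.trans (toFun s) x
  out_eq : ∀ s, A.out s = B.out (toFun s)

namespace Embedding

variable (φ : Embedding A B)

theorem run_toFun (s : A.S) (w : ℕ → X) (n : ℕ) :
    B.run (φ.toFun s) w n = φ.toFun (A.run s w n) := by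
  induction n with
  | zero => rfl
  | succ n ih => exact (congrArg (B.trans · (w n)) ih).trans (φ.map_trans _ _).symm

theorem act_toFun (s : A.S) : B.act (φ.toFun s) = A.act s := by
  funext w n
  rw [act, act, run_toFun, φ.out_eq]

/-- The image under an embedding of a list of edges, in particular of a cycle. -/
def mapEdges (c : List (A.S × X)) : List (B.S × X) :=
  c.map (Prod.map φ.toFun id)

theorem map_fst_mapEdges (c : List (A.S × X)) :
    (φ.mapEdges c).map Prod.fst = (c.map Prod.fst).map φ.toFun := by
  simp [mapEdges, Function.comp_def]

theorem mem_map_fst_mapEdges {s : A.S} {c : List (A.S × X)} (hs : s ∈ c.map Prod.fst) :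
    φ.toFun s ∈ (φ.mapEdges c).map Prod.fst := by
  rw [map_fst_mapEdges]
  exact List.mem_map_of_mem hs

theorem mapEdges_isRotated_iff {c₁ c₂ : List (A.S × X)} :
    φ.mapEdges c₁ ~r φ.mapEdges c₂ ↔ c₁ ~r c₂ := by
  have hinj : Function.Injective φ.mapEdges :=
    List.map_injective_iff.2 (φ.injective.prodMap Function.injective_id)
  refine ⟨fun ⟨n, hn⟩ => ⟨n, hinj ?_⟩, fun h => h.map _⟩
  rw [← hn, mapEdges, mapEdges, List.map_rotate]

theorem isNontrivialCycle_mapEdges {c : List (A.S × X)} (hc : A.IsNontrivialCycle c) :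
    B.IsNontrivialCycle (φ.mapEdges c) := by
  obtain ⟨⟨hne, hnodup, hchain, hclosed⟩, p, hp, hp_nontriv⟩ := hc
  refine ⟨⟨by simpa [mapEdges] using hne, ?_, ?_, fun _ => ?_⟩, _, List.mem_map_of_mem hp, ?_⟩
  · rw [map_fst_mapEdges]
    exact hnodup.map φ.injective
  · refine List.isChain_map_of_isChain _ (fun p q hpq => ?_) hchain
    exact (φ.map_trans _ _).symm.trans (congrArg φ.toFun hpq)
  · simp only [mapEdges, List.getLast_map, List.head_map, Prod.map_fst, Prod.map_snd, id,
      ← φ.map_trans, hclosed hne]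
  · rwa [IsTrivialState, Prod.map_fst, act_toFun]

theorem isPolynomial (φ : Embedding A B) (hB : B.IsPolynomial) : A.IsPolynomial := by
  rintro c₁ c₂ h₁ h₂ ⟨s, hs₁, hs₂⟩
  obtain ⟨n, hn⟩ := hB _ _ (φ.isNontrivialCycle_mapEdges h₁) (φ.isNontrivialCycle_mapEdges h₂)
    ⟨φ.toFun s, φ.mem_map_fst_mapEdges hs₁, φ.mem_map_fst_mapEdges hs₂⟩
  obtain ⟨m, hm⟩ := φ.mapEdges_isRotated_iff.1 ⟨n, hn.symm⟩
  exact ⟨m, hm.symm⟩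

theorem connectedTo_mapEdges {c₁ c₂ : List (A.S × X)} (h : A.ConnectedTo c₁ c₂) :
    B.ConnectedTo (φ.mapEdges c₁) (φ.mapEdges c₂) := by
  obtain ⟨s, t, hs, ht, hst⟩ := h
  refine ⟨φ.toFun s, φ.toFun t, φ.mem_map_fst_mapEdges hs, φ.mem_map_fst_mapEdges ht,
    hst.lift φ.toFun ?_⟩
  rintro p q ⟨x, rfl⟩
  exact ⟨x, (φ.map_trans p x).symm⟩

theorem isCycleChain_mapEdges {r : ℕ} {c : ℕ → List (A.S × X)} (hc : A.IsCycleChain r c) :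
    B.IsCycleChain r (φ.mapEdges ∘ c) where
  isNontrivialCycle i hi := φ.isNontrivialCycle_mapEdges (hc.isNontrivialCycle i hi)
  not_isRotated i hi j hj hij hrot :=
    hc.not_isRotated i hi j hj hij (φ.mapEdges_isRotated_iff.1 hrot)
  connectedTo i hi := φ.connectedTo_mapEdges (hc.connectedTo i hi)

theorem chainLe_of_isNontrivialCycle {d : ℕ} (hB : B.ChainLe (d + 1)) {t : B.S}
    {c₀ : List (B.S × X)} (hc₀ : B.IsNontrivialCycle c₀) (ht : t ∈ c₀.map Prod.fst)
    (hreach : ∀ q, Relation.ReflTransGen B.Edge t (φ.toFun q)) (hrange : t ∉ Set.range φ.toFun) :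
    A.ChainLe d := by
  refine chainLe_iff.2 fun r c hc => Nat.le_of_succ_le_succ (chainLe_iff.1 hB _ _
    ((φ.isCycleChain_mapEdges hc).cons hc₀ (fun i _ hrot => hrange ?_) fun hr => ?_))
  · have ht' := (hrot.map Prod.fst).mem_iff.1 ht
    rw [Function.comp_apply, map_fst_mapEdges] at ht'
    exact (List.mem_map.1 ht').imp fun _ h => h.2
  · obtain ⟨-, p, hp, -⟩ := hc.isNontrivialCycle 0 hr
    exact ⟨t, φ.toFun p.1, ht, φ.mem_map_fst_mapEdges (List.mem_map_of_mem hp), hreach p.1⟩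

end Embedding

section Reachable

variable (A) in
/-- The subautomaton of the states reachable from `r`. -/
noncomputable def reachable (r : A.S) : Automaton X where
  S := {q : A.S // Relation.ReflTransGen A.Edge r q}
  fin := Fintype.ofFinite _
  trans q x := ⟨A.trans q.1 x, q.2.tail ⟨x, rfl⟩⟩
  out q := A.out q.1
  inv q := A.inv q.1

variable (A) in
/-- The inclusion of the subautomaton of reachable states. -/
def reachableEmbedding (r : A.S) : Embedding (A.reachable r) A where
  toFun := Subtype.val
  injective := Subtype.val_injective
  map_trans _ _ := rfl
  out_eq _ := rfl

theorem degreeLt_act {d : ℕ} (hA : A.IsPolynomial) (hchain : A.ChainLe d) (s : A.S) :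
    DegreeLt (A.act s) d := by
  cases d <;> exact ⟨A, s, hA, hchain, rfl⟩

theorem degreeLt_act_of_not_reflTransGen {d : ℕ} (hA : A.IsPolynomial)
    (hchain : A.ChainLe (d + 1)) {t r : A.S} (ht_nontriv : ¬A.IsTrivialState t)
    (ht_circuit : A.IsCircuit t) (htr : Relation.ReflTransGen A.Edge t r)
    (hrt : ¬Relation.ReflTransGen A.Edge r t) : DegreeLt (A.act r) d := by
  obtain ⟨c, hc, htc⟩ := ht_circuit
  have hc_nontriv : A.IsNontrivialCycle c := by
    obtain ⟨p, hp, rfl⟩ := List.mem_map.1 htc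
    exact ⟨hc, p, hp, ht_nontriv⟩
  let φ := A.reachableEmbedding r
  have hreach_chain : (A.reachable r).ChainLe d :=
    φ.chainLe_of_isNontrivialCycle hchain hc_nontriv htc (fun q => htr.trans q.2)
      fun ⟨q, hq⟩ => hrt (hq ▸ q.2)
  exact φ.act_toFun ⟨r, .refl⟩ ▸ degreeLt_act (φ.isPolynomial hA) hreach_chain ⟨r, .refl⟩

end Reachable

end Automaton

section Degree

variable {X : Type*} {f : (ℕ → X) → (ℕ → X)} {d : ℕ}

theorem id_mem_finitary : id ∈ Finitary X := by
  let A : Automaton X := ⟨Unit, fun _ _ => (), fun _ => id, fun _ => Function.bijective_id⟩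
  have hno_cycle (c) : ¬A.IsNontrivialCycle c := fun ⟨_, _, _, hp⟩ => hp rfl
  refine ⟨A, (), fun c _ hc => absurd hc (hno_cycle c), fun r c hc _ _ => ?_, rfl⟩
  exact Nat.le_of_not_lt fun hr => hno_cycle _ (hc 0 hr)

theorem Finitary.restrictWord_mem (hf : f ∈ Finitary X) (v : List X) :
    restrictWord f v ∈ Finitary X := by
  obtain ⟨A, s, hA, hchain, rfl⟩ := hf
  exact ⟨A, A.transWord s v, hA, hchain, Automaton.act_transWord s v⟩

theorem Pol.restrictWord_mem (hf : f ∈ Pol X d) (v : List X) : restrictWord f v ∈ Pol X d := by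
  obtain ⟨A, s, hA, hchain, rfl⟩ := hf
  exact ⟨A, A.transWord s v, hA, hchain, Automaton.act_transWord s v⟩

theorem HasDegree.restrictWord_of_return (hf : HasDegree f d) {v z : List X}
    (hreturn : restrictWord f (v ++ z) = f) : HasDegree (restrictWord f v) d := by
  rw [restrictWord_append] at hreturn
  exact ⟨Pol.restrictWord_mem hf.1 v,
    fun h => hf.2.1 (hreturn ▸ Finitary.restrictWord_mem h z),
    fun d' hd' h => hf.2.2 d' hd' (hreturn ▸ Pol.restrictWord_mem h z)⟩

theorem DegreeLt.not_hasDegree (h : DegreeLt f d) : ¬HasDegree f d := by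
  cases d with
  | zero => exact fun hf => hf.2.1 h
  | succ d => exact fun hf => hf.2.2 d d.lt_succ_self h

theorem HasDegree.exists_isCircuit (hf : HasDegree f d) {w : List X} (hw : w ≠ [])
    (hfix : restrictWord f w = f) :
    ∃ (B : Automaton X) (t : B.S), B.IsPolynomial ∧ B.ChainLe (d + 1) ∧ B.act t = f ∧
      ¬B.IsTrivialState t ∧ B.IsCircuit t := by
  obtain ⟨⟨B, s, hB, hchain, rfl⟩, hnot_finitary, -⟩ := hf
  obtain ⟨t, hact, ht⟩ := Automaton.exists_isCircuit_of_restrictWord_eq hw hfix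
  refine ⟨B, t, hB, hchain, hact, fun htriv => hnot_finitary ?_, ht⟩
  rw [← hact, htriv]
  exact id_mem_finitary

theorem stmt9_general (hf : HasDegree f d) {w : List X} (hw : w ≠ [])
    (hfix : restrictWord f w = f) (n : ℕ) :
    ∃ v : List X, v.length = n ∧ HasDegree (restrictWord f v) d ∧
      (∀ v' : List X, v'.length = n → HasDegree (restrictWord f v') d → v' = v) ∧
      ∀ u : List X, u.length = n → u ≠ v → DegreeLt (restrictWord f u) d := by
  obtain ⟨B, t, hB, hchain, rfl, ht_nontriv, ht_circuit⟩ := hf.exists_isCircuit hw hfix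
  obtain ⟨v, z, hv, hreturn⟩ := ht_circuit.exists_returning_word n
  have hlt (u : List X) (hu : u.length = n) (huv : u ≠ v) :
      DegreeLt (restrictWord (B.act t) u) d := by
    rw [← Automaton.act_transWord]
    refine Automaton.degreeLt_act_of_not_reflTransGen hB hchain ht_nontriv ht_circuit
      (Automaton.reflTransGen_edge_iff.2 ⟨u, rfl⟩) fun hback => huv ?_
    obtain ⟨y, hy⟩ := Automaton.reflTransGen_edge_iff.1 hback
    rw [← Automaton.transWord_append] at hy
    exact hB.word_eq_of_return ht_nontriv (hu.trans hv.symm) hy hreturn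
  have hdeg : HasDegree (restrictWord (B.act t) v) d :=
    hf.restrictWord_of_return (z := z) (by rw [← Automaton.act_transWord, hreturn])
  exact ⟨v, hv, hdeg, fun v' hv' hdeg' => by_contra fun hne =>
    (hlt v' hv' hne).not_hasDegree hdeg', hlt⟩

end Degree

/-- Let `s` be a nontrivial circuit state of a polynomial automaton `A`, of degree `d`.
Then for every `n ≥ 1` there is exactly one word `v ∈ X^n` with `s|_v` of degree `d`,
and `s|_u` has degree strictly less than `d` for every other word `u ∈ X^n`. -/
theorem stmt9 {X : Type*} [Fintype X] (A : Automaton X) (hA : A.IsPolynomial)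
    (s : A.S) (hs_nontriv : ¬A.IsTrivialState s)
    (hs_circuit : ∃ c : List (A.S × X), A.IsCycle c ∧ s ∈ c.map Prod.fst)
    (d : ℕ) (hdeg : HasDegree (A.act s) d) :
    ∀ n : ℕ, 1 ≤ n →
      ∃ v : List X, v.length = n ∧ HasDegree (A.act (A.transWord s v)) d ∧
        (∀ v' : List X, v'.length = n → HasDegree (A.act (A.transWord s v')) d → v' = v) ∧
        ∀ u : List X, u.length = n → u ≠ v → DegreeLt (A.act (A.transWord s u)) d := by
  intro n _
  obtain ⟨w, hw, hws⟩ := Automaton.isCircuit_iff_exists_transWord_eq.1 hs_circuit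
  simpa only [Automaton.act_transWord] using
    stmt9_general hdeg hw (by rw [← Automaton.act_transWord, hws]) n
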